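/- Let F : ℝ₊^{n+1} → ℂ be supported in [0,R²] × (B(x₀, 2^{j+1}R) \ B(x₀, 2^j R)) for some j ≥ 1, and suppose the family ((t-s)Δe^{(t-s)Δ}) satisfies L² off-diagonal estimates of order M with homogeneity 2: ‖1_E (t-s)Δe^{(t-s)Δ} 1_F f‖_{L²} ≤ C(1 + dist(E,F)²/(t-s))^{-M}‖1_F f‖_{L²}. Then for M > n/4, ∫₀^{R²}∫_{B(x₀,R)} |M⁺F(t,x)|² dx dt ≤ C 2^{-4Mj} ‖F‖²_{L²([0,R²]×ℝⁿ)}, where M⁺ F(t,·) = ∫₀ᵗ e^{(t-s)Δ}ΔF(s,·) ds. Consequently M⁺ is bounded on T^{∞,2}. -/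

import Mathlib

/-!
Both estimates follow from explicit knowledge of the kernel `lapHeatK` of `Δ e^{τΔ}`.

*Off-diagonal part.* Trading the Gaussian for powers gives, for every `N > 0`,
`|lapHeatK n τ z| ≤ c τ ^ (N - n/2 - 1) ‖z‖ ^ (-2N)` (`exists_lapHeatK_le`). As soon as
`N ≥ n/2 + 1` the power of `τ` is nonnegative, so for `x` in `B(x₀, R)`, `0 ≤ s ≤ t ≤ R²` and `y` in
the `j`-th annulus the kernel is at most a constant times
`(R²) ^ (N - n/2 - 1) (2^j R) ^ (-2N)`. Cauchy–Schwarz over `[0, R²] × annulus` turns this into a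
pointwise bound of `absPot`, the integral with absolute values inside, which dominates `maxReg`
(`exists_absPot_annulus_le`). With `N = M + n/2 + 1`, squaring and integrating over the box gives a
decay of order `2 ^ (-(4M + n + 4) j)`, which is better than required.

*Diagonal part.* `maxReg` is the limit, as `ε → 0`, of space-time convolutions with the kernel
restricted to `ε < τ ≤ L`. The truncated kernel is integrable on `ℝ × ℝⁿ`, and its Fourier
transform is at most `∫₀^∞ a e^{-aτ} dτ ≤ 1` with `a = 4π²‖ξ‖²`, so Plancherel bounds the
truncated operators on `L²` by `1`, uniformly in `ε`. Fatou's lemma passes to the limit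
(`deSimon`). At points where the defining integral of `maxReg` diverges, its value is `0` and
there is nothing to prove.

*Tent space.* Given a box `[0, R²] × B(x₀, R)`, split `F` into its restriction to
`[0, R²] × B(x₀, 2R)`, to which `deSimon` applies, and the part over the complement of
`B(x₀, 2R)`, which is covered by the annuli `j ≥ 1`. With `N = n/2 + 1` the contribution of the
`j`-th annulus is a multiple of `R⁻¹ 4 ^ (-j)` times the tent norm, and these sum geometrically.
-/

open MeasureTheory Metric
open scoped ENNReal NNReal

/-- The heat kernel on `ℝⁿ`. -/
noncomputable def heatK (n : ℕ) (τ : ℝ) (x : EuclideanSpace ℝ (Fin n)) : ℝ :=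
  (4 * Real.pi * τ) ^ (-(n:ℝ)/2) * Real.exp (-‖x‖ ^ 2 / (4 * τ))

/-- The kernel of `Δ e^{τΔ}`. -/
noncomputable def lapHeatK (n : ℕ) (τ : ℝ) (x : EuclideanSpace ℝ (Fin n)) : ℝ :=
  heatK n τ x * (‖x‖ ^ 2 / (4 * τ ^ 2) - n / (2 * τ))

/-- The operator `Δ e^{τΔ}`, as convolution with `lapHeatK`. -/
noncomputable def lapHeatOp (n : ℕ) (τ : ℝ) (f : EuclideanSpace ℝ (Fin n) → ℂ)
    (x : EuclideanSpace ℝ (Fin n)) : ℂ :=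
  ∫ y, ((lapHeatK n τ (x - y) : ℝ) : ℂ) * f y

/-- The maximal regularity operator `M⁺F(t,·) = ∫₀ᵗ e^{(t-s)Δ} Δ F(s,·) ds`. -/
noncomputable def maxReg (n : ℕ) (F : ℝ × EuclideanSpace ℝ (Fin n) → ℂ)
    (z : ℝ × EuclideanSpace ℝ (Fin n)) : ℂ :=
  ∫ s in Set.Ioc (0:ℝ) z.1, lapHeatOp n (z.1 - s) (fun y => F (s, y)) z.2

/-- The distance between two sets. -/
noncomputable def setDist {α : Type*} [PseudoMetricSpace α] (A B : Set α) : ℝ :=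
  sInf (Set.image2 dist A B)

/-- The `T^{∞,2}` tent-space norm. -/
noncomputable def tentNorm2 (n : ℕ) (F : ℝ × EuclideanSpace ℝ (Fin n) → ℂ) : ℝ≥0∞ :=
  ⨆ (x₀ : EuclideanSpace ℝ (Fin n)) (R : ℝ) (_ : 0 < R),
    ((volume (ball x₀ R))⁻¹ *
      ∫⁻ z in Set.Icc (0:ℝ) (R ^ 2) ×ˢ ball x₀ R, ENNReal.ofReal (‖F z‖ ^ 2)) ^ (1/2 : ℝ)

/-! ### Plancherel and `L²` bounds for convolutions -/

section Plancherel

open FourierTransform SchwartzMap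

variable {V : Type*} [NormedAddCommGroup V] [InnerProductSpace ℝ V] [FiniteDimensional ℝ V]
  [MeasurableSpace V] [BorelSpace V]

/-- On `L¹ ∩ L²` the extension of the Fourier transform to `L²` agrees with the integral formula.
Both sides are tested against smooth compactly supported functions, where the claim is the
self-adjointness of the Fourier integral. -/
theorem fourier_toLp_ae_eq {f : V → ℂ} (h1 : Integrable f) (h2 : MemLp f 2) :
    ((𝓕 (h2.toLp f) : Lp ℂ 2 (volume : Measure V)) : V → ℂ) =ᵐ[volume] 𝓕 f := by
  have hcont : Continuous (𝓕 f) :=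
    VectorFourier.fourierIntegral_continuous Real.continuous_fourierChar
      (by exact continuous_inner) h1
  refine ae_eq_of_integral_contDiff_smul_eq ?_ hcont.locallyIntegrable ?_
  · exact (Lp.memLp (𝓕 (h2.toLp f))).locallyIntegrable (by norm_num)
  intro g hg hgs
  let φ : 𝓢(V, ℂ) := (hgs.comp_left (g := ((↑) : ℝ → ℂ)) (by simp)).toSchwartzMap
    (Complex.ofRealCLM.contDiff.comp hg)
  have hφ : ∀ x, φ x = (g x : ℂ) := fun x => rfl
  have key := congrArg (fun T : 𝓢'(V, ℂ) => T φ) (Lp.fourier_toTemperedDistribution_eq (h2.toLp f))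
  simp only [TemperedDistribution.fourier_apply, Lp.toTemperedDistribution_apply] at key
  have e1 : ∫ x, g x • ((𝓕 (h2.toLp f) : Lp ℂ 2 (volume : Measure V)) : V → ℂ) x
      = ∫ x, φ x • ((𝓕 (h2.toLp f) : Lp ℂ 2 (volume : Measure V)) : V → ℂ) x := by
    simp [hφ]
  have e2 : ∫ x, g x • 𝓕 f x = ∫ x, φ x • 𝓕 f x := by simp [hφ]
  rw [e1, e2, ← key]
  have e3 : ∫ x, (𝓕 φ) x • (h2.toLp f : V → ℂ) x = ∫ x, (𝓕 φ) x • f x := by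
    apply integral_congr_ae
    filter_upwards [h2.coeFn_toLp] with x hx
    rw [hx]
  rw [e3]
  have := VectorFourier.integral_fourierIntegral_smul_eq_flip (μ := (volume : Measure V)) (ν := (volume : Measure V))
    (e := Real.fourierChar) (L := innerₗ V) (f := φ) (g := f)
    Real.continuous_fourierChar (by exact continuous_inner) φ.integrable h1
  simpa [flip_innerₗ] using! this

/-- Plancherel on `L¹ ∩ L²`, for the Fourier transform given by the integral. -/
theorem eLpNorm_fourier_eq {f : V → ℂ} (h1 : Integrable f) (h2 : MemLp f 2) :
    eLpNorm (𝓕 f) 2 volume = eLpNorm f 2 volume := by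
  have h := Lp.norm_fourier_eq (h2.toLp f)
  rw [Lp.norm_def, Lp.norm_def, ENNReal.toReal_eq_toReal_iff' (Lp.eLpNorm_ne_top _)
    (Lp.eLpNorm_ne_top _), eLpNorm_congr_ae (fourier_toLp_ae_eq h1 h2),
    eLpNorm_congr_ae h2.coeFn_toLp] at h
  exact h

open scoped Convolution in
/-- Boundedness of `κ` puts `κ ⋆ f` in `L²` a priori, so that Plancherel applies to it. -/
theorem eLpNorm_convolution_le {κ f : V → ℂ} (hκ : Integrable κ) {B : ℝ} (hB : ∀ x, ‖κ x‖ ≤ B)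
    (hhat : ∀ ξ, ‖𝓕 κ ξ‖ ≤ 1) (h1 : Integrable f) (h2 : MemLp f 2) :
    eLpNorm (κ ⋆[ContinuousLinearMap.mul ℂ ℂ] f) 2 volume ≤ eLpNorm f 2 volume := by
  have hg1 : Integrable (κ ⋆[ContinuousLinearMap.mul ℂ ℂ] f) :=
    hκ.integrable_convolution _ h1
  have hgB : ∀ x, ‖(κ ⋆[ContinuousLinearMap.mul ℂ ℂ] f) x‖ ≤ B * ∫ y, ‖f y‖ := by
    intro x
    rw [convolution_mul_swap, ← integral_const_mul]
    refine norm_integral_le_of_norm_le (h1.norm.const_mul B) (ae_of_all _ fun y => ?_)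
    rw [norm_mul]
    gcongr
    exact hB _
  have hg2 : MemLp (κ ⋆[ContinuousLinearMap.mul ℂ ℂ] f) 2 := by
    rw [memLp_two_iff_integrable_sq_norm hg1.1]
    refine (hg1.norm.const_mul (B * ∫ y, ‖f y‖)).mono (by fun_prop) (ae_of_all _ fun x => ?_)
    rw [pow_two, norm_mul, norm_mul]
    gcongr
    simpa using (hgB x).trans (le_abs_self _)
  rw [← eLpNorm_fourier_eq hg1 hg2, ← eLpNorm_fourier_eq h1 h2]
  refine eLpNorm_mono fun ξ => ?_
  rw [Real.fourier_mul_convolution_eq hκ h1, norm_mul]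
  exact mul_le_of_le_one_left (norm_nonneg _) (hhat ξ)

end Plancherel

/-! ### The kernel of `Δ e^{τΔ}`: decay and Fourier transform -/

section Kernel

theorem rpow_le_mul_exp {a u : ℝ} (ha : 0 < a) (hu : 0 ≤ u) :
    u ^ a ≤ a ^ a * Real.exp u := by
  have h1 : u / a ≤ Real.exp (u / a) := by linarith [Real.add_one_le_exp (u / a)]
  have h2 : (u / a) ^ a ≤ Real.exp (u / a) ^ a := Real.rpow_le_rpow (by positivity) h1 ha.le
  rw [← Real.exp_mul, div_mul_cancel₀ _ ha.ne', Real.div_rpow hu ha.le,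
    div_le_iff₀ (by positivity)] at h2
  linarith

variable {n : ℕ}

theorem abs_lapHeatK_le {τ : ℝ} (hτ : 0 < τ) (z : EuclideanSpace ℝ (Fin n)) :
    |lapHeatK n τ z| ≤ (4 * Real.pi * τ) ^ (-(n:ℝ)/2) * τ⁻¹ *
      ((‖z‖ ^ 2 / (4 * τ) + n / 2) * Real.exp (-(‖z‖ ^ 2 / (4 * τ)))) := by
  have hpi := Real.pi_pos
  have h0 : 0 ≤ (4 * Real.pi * τ) ^ (-(n:ℝ)/2) := by positivity
  have h1 : ‖z‖ ^ 2 / (4 * τ ^ 2) - n / (2 * τ) = τ⁻¹ * (‖z‖ ^ 2 / (4 * τ) - n / 2) := by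
    field_simp
  have h2 : |‖z‖ ^ 2 / (4 * τ) - n / 2| ≤ ‖z‖ ^ 2 / (4 * τ) + n / 2 := by
    have : 0 ≤ ‖z‖ ^ 2 / (4 * τ) := by positivity
    rw [abs_le]; constructor <;> linarith [(Nat.cast_nonneg n : (0:ℝ) ≤ n)]
  rw [lapHeatK, heatK, h1, abs_mul, abs_mul, abs_mul, abs_of_nonneg h0, abs_of_pos (Real.exp_pos _),
    abs_of_pos (inv_pos.2 hτ), neg_div (4 * τ)]
  calc _ = (4 * Real.pi * τ) ^ (-(n:ℝ)/2) * τ⁻¹ * (|‖z‖ ^ 2 / (4 * τ) - n / 2| *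
        Real.exp (-(‖z‖ ^ 2 / (4 * τ)))) := by ring
    _ ≤ _ := mul_le_mul_of_nonneg_left
        (mul_le_mul_of_nonneg_right h2 (Real.exp_pos _).le) (by positivity)

/-- Polynomial off-diagonal decay of arbitrary order: each factor `τ / ‖z‖²` gained comes from the
Gaussian. -/
theorem exists_lapHeatK_le (n : ℕ) {N : ℝ} (hN : 0 < N) :
    ∃ c : ℝ, 0 < c ∧ ∀ τ : ℝ, 0 < τ → ∀ z : EuclideanSpace ℝ (Fin n), z ≠ 0 →
      |lapHeatK n τ z| ≤ c * τ ^ (N - n / 2 - 1) * ‖z‖ ^ (-(2 * N)) := by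
  have hpi := Real.pi_pos
  refine ⟨(4 * Real.pi) ^ (-(n:ℝ)/2) * 4 ^ N * ((N + 1) ^ (N + 1) + n / 2 * N ^ N),
    by positivity, fun τ hτ z hz => (abs_lapHeatK_le hτ z).trans ?_⟩
  have hz' : 0 < ‖z‖ := norm_pos_iff.2 hz
  set u := ‖z‖ ^ 2 / (4 * τ) with hu
  have hu0 : 0 < u := by positivity
  have h1 : (u + n / 2) * Real.exp (-u) ≤ ((N + 1) ^ (N + 1) + n / 2 * N ^ N) * u ^ (-N) := by
    have e1 := rpow_le_mul_exp (by linarith : 0 < N + 1) hu0.le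
    have e2 := rpow_le_mul_exp hN hu0.le
    rw [Real.rpow_add_one hu0.ne'] at e1
    rw [Real.exp_neg, Real.rpow_neg hu0.le, ← div_eq_mul_inv, ← div_eq_mul_inv,
      div_le_div_iff₀ (Real.exp_pos _) (by positivity)]
    have : n / 2 * u ^ N ≤ n / 2 * (N ^ N * Real.exp u) := by gcongr
    nlinarith
  have h2 : u ^ (-N) = 4 ^ N * τ ^ N * ‖z‖ ^ (-(2 * N)) := by
    rw [hu, Real.rpow_neg (by positivity), Real.div_rpow (by positivity) (by positivity),
      Real.mul_rpow (by positivity) hτ.le, inv_div, Real.rpow_neg hz'.le, Real.rpow_mul hz'.le,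
      div_eq_mul_inv]
    norm_num
  have h3 : (4 * Real.pi * τ) ^ (-(n:ℝ)/2) * τ⁻¹ * τ ^ N
      = (4 * Real.pi) ^ (-(n:ℝ)/2) * τ ^ (N - n / 2 - 1) := by
    rw [Real.mul_rpow (by positivity) hτ.le, mul_assoc, mul_assoc, ← Real.rpow_neg_one,
      ← Real.rpow_add hτ, ← Real.rpow_add hτ]
    ring_nf
  calc _ ≤ (4 * Real.pi * τ) ^ (-(n:ℝ)/2) * τ⁻¹ *
        (((N + 1) ^ (N + 1) + n / 2 * N ^ N) * u ^ (-N)) := by gcongr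
    _ = ((4 * Real.pi * τ) ^ (-(n:ℝ)/2) * τ⁻¹ * τ ^ N) *
        (((N + 1) ^ (N + 1) + n / 2 * N ^ N) * 4 ^ N * ‖z‖ ^ (-(2 * N))) := by rw [h2]; ring
    _ = _ := by rw [h3]; ring

/-- The Gaussian bound, uniform for `τ` in a compact subset of `(0, ∞)`. -/
theorem exists_lapHeatK_le_gaussian (n : ℕ) {ε L : ℝ} (hε : 0 < ε) :
    ∃ c : ℝ, 0 < c ∧ ∀ τ : ℝ, ε ≤ τ → τ ≤ L → ∀ z : EuclideanSpace ℝ (Fin n),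
      |lapHeatK n τ z| ≤ c * Real.exp (-(8 * L)⁻¹ * ‖z‖ ^ 2) := by
  have hpi := Real.pi_pos
  refine ⟨(4 * Real.pi * ε) ^ (-(n:ℝ)/2) * ε⁻¹ * (2 + n / 2), by positivity,
    fun τ h1 h2 z => (abs_lapHeatK_le (hε.trans_le h1) z).trans ?_⟩
  have hτ := hε.trans_le h1
  set u := ‖z‖ ^ 2 / (4 * τ) with hu
  have hu0 : 0 ≤ u := by positivity
  have e1 : (u + n / 2) * Real.exp (-u) ≤ (2 + n / 2) * Real.exp (-(u / 2)) := by
    have a1 : u / 2 * Real.exp (-(u / 2)) ≤ 1 := by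
      rw [Real.exp_neg, ← div_eq_mul_inv, div_le_one (Real.exp_pos _)]
      linarith [Real.add_one_le_exp (u / 2)]
    have a2 : Real.exp (-u) = Real.exp (-(u / 2)) * Real.exp (-(u / 2)) := by
      rw [← Real.exp_add]; ring_nf
    have a3 : Real.exp (-(u / 2)) ≤ 1 := Real.exp_le_one_iff.2 (by linarith)
    have a4 := Real.exp_pos (-(u / 2))
    have a5 : (n : ℝ) / 2 * Real.exp (-(u / 2)) ≤ n / 2 := mul_le_of_le_one_right (by positivity) a3
    rw [a2, ← mul_assoc]
    gcongr
    nlinarith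
  have e2 : Real.exp (-(u / 2)) ≤ Real.exp (-(8 * L)⁻¹ * ‖z‖ ^ 2) := by
    rw [Real.exp_le_exp, hu, neg_mul, neg_le_neg_iff, div_div, inv_mul_eq_div]
    exact div_le_div_of_nonneg_left (by positivity) (by positivity) (by linarith)
  have e3 : (4 * Real.pi * τ) ^ (-(n:ℝ)/2) ≤ (4 * Real.pi * ε) ^ (-(n:ℝ)/2) := by
    apply Real.rpow_le_rpow_of_nonpos (by positivity) (by gcongr)
    have : (0:ℝ) ≤ n := Nat.cast_nonneg n
    linarith
  have e4 : τ⁻¹ ≤ ε⁻¹ := by gcongr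
  calc _ ≤ (4 * Real.pi * ε) ^ (-(n:ℝ)/2) * ε⁻¹ * ((2 + n / 2) * Real.exp (-(8 * L)⁻¹ * ‖z‖ ^ 2)) := by
        refine (mul_le_mul_of_nonneg_left (e1.trans (mul_le_mul_of_nonneg_left e2 (by positivity)))
          (by positivity)).trans ?_
        gcongr
    _ = _ := by ring

theorem measurable_lapHeatK : Measurable fun p : ℝ × EuclideanSpace ℝ (Fin n) =>
    lapHeatK n p.1 p.2 := by
  unfold lapHeatK heatK
  fun_prop

theorem continuous_lapHeatK (τ : ℝ) : Continuous (lapHeatK n τ) := by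
  unfold lapHeatK heatK
  fun_prop

theorem continuous_heatK (τ : ℝ) : Continuous (heatK n τ) := by
  unfold heatK
  fun_prop

theorem integrable_gaussian {b : ℝ} (hb : 0 < b) :
    Integrable fun x : EuclideanSpace ℝ (Fin n) => Real.exp (-b * ‖x‖ ^ 2) := by
  have := (GaussianFourier.integrable_cexp_neg_mul_sq_norm_add (V := EuclideanSpace ℝ (Fin n))
    (b := (b : ℂ)) (by simpa using hb) 0 0).norm
  refine this.congr (ae_of_all _ fun x => ?_)
  simp [Complex.norm_exp, ← Complex.ofReal_pow]

/-- The heat equation: since `lapHeatK` is the Laplacian of the heat kernel, it is also its time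
derivative. -/
theorem hasDerivAt_heatK {τ : ℝ} (hτ : 0 < τ) (x : EuclideanSpace ℝ (Fin n)) :
    HasDerivAt (fun τ => heatK n τ x) (lapHeatK n τ x) τ := by
  have hpi := Real.pi_pos
  have h1 : HasDerivAt (fun τ : ℝ => (4 * Real.pi * τ) ^ (-(n:ℝ)/2))
      (4 * Real.pi * (-(n:ℝ)/2) * (4 * Real.pi * τ) ^ (-(n:ℝ)/2 - 1)) τ := by
    have := ((hasDerivAt_id τ).const_mul (4 * Real.pi)).rpow_const (p := -(n:ℝ)/2)
      (Or.inl (by simp; positivity))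
    simpa using this
  have h2 : HasDerivAt (fun τ : ℝ => Real.exp (-‖x‖ ^ 2 / (4 * τ)))
      (Real.exp (-‖x‖ ^ 2 / (4 * τ)) * (‖x‖ ^ 2 / (4 * τ ^ 2))) τ := by
    have := ((hasDerivAt_inv hτ.ne').const_mul (-‖x‖ ^ 2 / 4)).exp
    convert! this using 1
    · ext t; congr 1; by_cases ht : t = 0
      · simp [ht]
      · field_simp
    · field_simp
  have := h1.mul h2
  convert! this using 1
  rw [lapHeatK, heatK, Real.rpow_sub_one (by positivity)]
  field_simp
  ring

open FourierTransform

theorem integrable_heatK {τ : ℝ} (hτ : 0 < τ) :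
    Integrable fun x : EuclideanSpace ℝ (Fin n) => ((heatK n τ x : ℝ) : ℂ) := by
  refine Integrable.ofReal ?_
  refine ((integrable_gaussian (n := n) (b := (4 * τ)⁻¹) (by positivity)).const_mul
    ((4 * Real.pi * τ) ^ (-(n:ℝ)/2))).congr (ae_of_all _ fun x => ?_)
  change _ = heatK n τ x
  rw [heatK]
  ring_nf

theorem fourier_heatK {τ : ℝ} (hτ : 0 < τ) (ξ : EuclideanSpace ℝ (Fin n)) :
    𝓕 (fun x : EuclideanSpace ℝ (Fin n) => ((heatK n τ x : ℝ) : ℂ)) ξ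
      = Complex.exp (-(4 * Real.pi ^ 2 * ‖ξ‖ ^ 2) * τ : ℝ) := by
  have hpi := Real.pi_pos
  have h := fourier_gaussian_innerProductSpace (V := EuclideanSpace ℝ (Fin n))
    (b := (((4 * τ)⁻¹ : ℝ) : ℂ)) (by rw [Complex.ofReal_re]; positivity) ξ
  have e : (fun x : EuclideanSpace ℝ (Fin n) => ((heatK n τ x : ℝ) : ℂ)) =
      ((((4 * Real.pi * τ) ^ (-(n:ℝ)/2) : ℝ)) : ℂ) •
        fun v : EuclideanSpace ℝ (Fin n) => Complex.exp (-(((4 * τ)⁻¹ : ℝ) : ℂ) * ‖v‖ ^ 2) := by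
    ext x
    simp only [heatK, Pi.smul_apply, smul_eq_mul]
    push_cast
    congr 2
    ring
  rw [e, show ∀ (a : ℂ) (g : EuclideanSpace ℝ (Fin n) → ℂ), 𝓕 (a • g) ξ = a • 𝓕 g ξ from
    fun a g => congrFun (VectorFourier.fourierIntegral_const_smul Real.fourierChar volume
      (innerₗ _) g a) ξ, h, finrank_euclideanSpace, Fintype.card_fin]
  have e2 : ((Real.pi : ℂ) / (((4 * τ)⁻¹ : ℝ) : ℂ)) ^ ((n : ℂ) / 2)
      = (((4 * Real.pi * τ) ^ ((n:ℝ)/2) : ℝ) : ℂ) := by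
    rw [Complex.ofReal_cpow (by positivity)]
    push_cast
    congr 1
    field_simp
  rw [e2, smul_eq_mul, ← mul_assoc, ← Complex.ofReal_mul, ← Real.rpow_add (by positivity)]
  have : -(n:ℝ)/2 + n/2 = 0 := by ring
  rw [this]
  simp only [Real.rpow_zero, Complex.ofReal_one, one_mul]
  congr 1
  push_cast
  field_simp

/-- Obtained by differentiating `fourier_heatK` in `τ` under the integral sign. -/
theorem fourier_lapHeatK {τ : ℝ} (hτ : 0 < τ) (ξ : EuclideanSpace ℝ (Fin n)) :
    𝓕 (fun x : EuclideanSpace ℝ (Fin n) => ((lapHeatK n τ x : ℝ) : ℂ)) ξ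
      = ((-(4 * Real.pi ^ 2 * ‖ξ‖ ^ 2) * Real.exp (-(4 * Real.pi ^ 2 * ‖ξ‖ ^ 2) * τ) : ℝ) : ℂ) := by
  obtain ⟨c, hc, hb⟩ := exists_lapHeatK_le_gaussian n (ε := τ / 2) (L := 2 * τ) (by positivity)
  have hd := hasDerivAt_integral_of_dominated_loc_of_deriv_le (𝕜 := ℝ) (μ := volume)
    (F := fun (τ : ℝ) (x : EuclideanSpace ℝ (Fin n)) =>
      Real.fourierChar (-(inner ℝ x ξ)) • ((heatK n τ x : ℝ) : ℂ))
    (F' := fun (τ : ℝ) (x : EuclideanSpace ℝ (Fin n)) =>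
      Real.fourierChar (-(inner ℝ x ξ)) • ((lapHeatK n τ x : ℝ) : ℂ))
    (x₀ := τ) (s := Set.Ioo (τ / 2) (2 * τ))
    (bound := fun x => c * Real.exp (-(8 * (2 * τ))⁻¹ * ‖x‖ ^ 2))
    (Ioo_mem_nhds (by linarith) (by linarith))
    ?_ ?_ ?_ ?_ ((integrable_gaussian (by positivity)).const_mul c) ?_
  · have h2 : HasDerivAt (fun τ : ℝ => Complex.exp (-(4 * Real.pi ^ 2 * ‖ξ‖ ^ 2) * τ : ℝ))
        ((-(4 * Real.pi ^ 2 * ‖ξ‖ ^ 2) * Real.exp (-(4 * Real.pi ^ 2 * ‖ξ‖ ^ 2) * τ) : ℝ) : ℂ) τ := by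
      have := ((hasDerivAt_id τ).const_mul (-(4 * Real.pi ^ 2 * ‖ξ‖ ^ 2))).exp.ofReal_comp
      simp only [Complex.ofReal_exp, id, mul_one] at this
      convert! this using 1
      push_cast
      ring
    refine hd.2.unique (h2.congr_of_eventuallyEq ?_)
    filter_upwards [lt_mem_nhds hτ] with t ht
    exact fourier_heatK ht ξ
  · refine Filter.Eventually.of_forall fun t => Continuous.aestronglyMeasurable ?_
    have := continuous_heatK (n := n) t
    fun_prop
  · exact (Real.fourierIntegral_convergent_iff ξ).2 (integrable_heatK hτ)
  · refine Continuous.aestronglyMeasurable ?_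
    have := continuous_lapHeatK (n := n) τ
    fun_prop
  · refine ae_of_all _ fun x t ht => ?_
    rw [Circle.norm_smul, Complex.norm_real]
    exact hb t ht.1.le ht.2.le x
  · refine ae_of_all _ fun x t ht => ?_
    have := (hasDerivAt_heatK (n := n) (by linarith [ht.1] : 0 < t) x).ofReal_comp
    simpa only [Circle.smul_def] using! this.const_smul ((Real.fourierChar (-(inner ℝ x ξ)) : Circle) : ℂ)

end Kernel

/-! ### Maximal regularity on `L²` -/

section DeSimon

open FourierTransform

variable {n : ℕ}

/-- The kernel of `M⁺` as a function on space-time, truncated to times `ε < τ ≤ L`. For `ε > 0` it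
is bounded and integrable. -/
noncomputable def truncK (n : ℕ) (ε L : ℝ) (p : ℝ × EuclideanSpace ℝ (Fin n)) : ℂ :=
  (Set.Ioc ε L).indicator (fun τ => ((lapHeatK n τ p.2 : ℝ) : ℂ)) p.1

/-- Space-time convolution with the truncated kernel. -/
noncomputable def truncOp (n : ℕ) (ε L : ℝ) (F : ℝ × EuclideanSpace ℝ (Fin n) → ℂ)
    (z : ℝ × EuclideanSpace ℝ (Fin n)) : ℂ :=
  ∫ w, truncK n ε L (z - w) * F w

theorem measurable_truncK (ε L : ℝ) : Measurable (truncK n ε L) := by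
  have : truncK n ε L = (Prod.fst ⁻¹' Set.Ioc ε L).indicator
      fun p : ℝ × EuclideanSpace ℝ (Fin n) => ((lapHeatK n p.1 p.2 : ℝ) : ℂ) := by
    ext p; simp only [truncK, Set.indicator, Set.mem_preimage]
  rw [this]
  exact (Complex.measurable_ofReal.comp measurable_lapHeatK).indicator
    (measurable_fst measurableSet_Ioc)

theorem exists_norm_truncK_le {ε L : ℝ} (hε : 0 < ε) :
    ∃ c : ℝ, 0 < c ∧ ∀ p : ℝ × EuclideanSpace ℝ (Fin n),
      ‖truncK n ε L p‖ ≤ (Set.Ioc ε L).indicator (fun _ => c) p.1 *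
        Real.exp (-(8 * L)⁻¹ * ‖p.2‖ ^ 2) := by
  obtain ⟨c, hc, h⟩ := exists_lapHeatK_le_gaussian n (L := L) hε
  refine ⟨c, hc, fun p => ?_⟩
  by_cases hp : p.1 ∈ Set.Ioc ε L
  · rw [truncK, Set.indicator_of_mem hp, Set.indicator_of_mem hp, Complex.norm_real]
    exact h _ hp.1.le hp.2 _
  · simp [truncK, hp]

theorem exists_norm_truncK_le' {ε L : ℝ} (hε : 0 < ε) (hL : 0 < L) :
    ∃ c : ℝ, 0 < c ∧ ∀ p : ℝ × EuclideanSpace ℝ (Fin n), ‖truncK n ε L p‖ ≤ c := by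
  obtain ⟨c, hc, h⟩ := exists_norm_truncK_le (n := n) (L := L) hε
  refine ⟨c, hc, fun p => (h p).trans ?_⟩
  have : Real.exp (-(8 * L)⁻¹ * ‖p.2‖ ^ 2) ≤ 1 := by
    rw [Real.exp_le_one_iff, neg_mul]
    have : 0 ≤ (8 * L)⁻¹ * ‖p.2‖ ^ 2 := by positivity
    linarith
  have h2 : (Set.Ioc ε L).indicator (fun _ => c) p.1 ≤ c :=
    Set.indicator_apply_le' (fun _ => le_rfl) (fun _ => hc.le)
  exact (mul_le_mul h2 this (Real.exp_pos _).le hc.le).trans_eq (mul_one c)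

theorem integrable_truncK {ε L : ℝ} (hε : 0 < ε) (hL : 0 < L) :
    Integrable (truncK n ε L) := by
  obtain ⟨c, hc, h⟩ := exists_norm_truncK_le (n := n) (L := L) hε
  have hi : Integrable ((Set.Ioc ε L).indicator (fun _ => c) : ℝ → ℝ) :=
    IntegrableOn.integrable_indicator (integrableOn_const (by simp)) measurableSet_Ioc
  exact (hi.mul_prod (integrable_gaussian (n := n) (b := (8 * L)⁻¹) (by positivity))).mono'
    (measurable_truncK ε L).aestronglyMeasurable (ae_of_all _ h)

/-- The Fourier multiplier of the truncated operator is bounded by `1` uniformly in `ε` and `L`: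
after the spatial transform the modulus is `a e^{-aτ}` with `a = 4π²‖ξ‖²`, whose integral over
`(ε, L]` is `e^{-aε} - e^{-aL}`. `WithLp 2` makes space-time an inner product space. -/
theorem norm_fourier_truncK_le {ε L : ℝ} (hε : 0 < ε) (hL : ε ≤ L)
    (ξ : WithLp 2 (ℝ × EuclideanSpace ℝ (Fin n))) :
    ‖𝓕 (fun v : WithLp 2 (ℝ × EuclideanSpace ℝ (Fin n)) => truncK n ε L (WithLp.ofLp v)) ξ‖ ≤ 1 := by
  set a : ℝ := 4 * Real.pi ^ 2 * ‖ξ.snd‖ ^ 2 with ha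
  have ha0 : 0 ≤ a := by positivity
  rw [Real.fourier_eq]
  have e1 : ∫ v : WithLp 2 (ℝ × EuclideanSpace ℝ (Fin n)),
      Real.fourierChar (-inner ℝ v ξ) • truncK n ε L (WithLp.ofLp v)
      = ∫ p : ℝ × EuclideanSpace ℝ (Fin n),
        Real.fourierChar (-inner ℝ (WithLp.toLp 2 p) ξ) • truncK n ε L p :=
    ((WithLp.volume_preserving_ofLp ℝ (EuclideanSpace ℝ (Fin n))).integral_comp
      (MeasurableEquiv.toLp 2 _).symm.measurableEmbedding
      (fun p => Real.fourierChar (-inner ℝ (WithLp.toLp 2 p) ξ) • truncK n ε L p))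
  have h_int : Integrable fun p : ℝ × EuclideanSpace ℝ (Fin n) =>
      Real.fourierChar (-inner ℝ (WithLp.toLp 2 p) ξ) • truncK n ε L p := by
    refine (integrable_truncK (n := n) hε (hε.trans_le hL)).mono ?_ (ae_of_all _ fun p => ?_)
    · have h1 : Continuous fun p : ℝ × EuclideanSpace ℝ (Fin n) =>
        ((Real.fourierChar (-inner ℝ (WithLp.toLp 2 p) ξ) : Circle) : ℂ) := by
        have := Real.continuous_fourierChar
        fun_prop
      exact (h1.measurable.mul (measurable_truncK ε L)).aestronglyMeasurable
    · rw [Circle.norm_smul]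
  rw [e1, Measure.volume_eq_prod, integral_prod _ h_int]
  have e2 : ∀ τ : ℝ, ‖∫ x : EuclideanSpace ℝ (Fin n),
      Real.fourierChar (-inner ℝ (WithLp.toLp 2 (τ, x)) ξ) • truncK n ε L (τ, x)‖
      = (Set.Ioc ε L).indicator (fun τ => a * Real.exp (-a * τ)) τ := by
    intro τ
    by_cases hτ : τ ∈ Set.Ioc ε L
    · have : ∀ x : EuclideanSpace ℝ (Fin n),
          Real.fourierChar (-inner ℝ (WithLp.toLp 2 (τ, x)) ξ) • truncK n ε L (τ, x)
          = ((Real.fourierChar (-inner ℝ τ ξ.fst) : Circle) : ℂ) *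
            (Real.fourierChar (-inner ℝ x ξ.snd) • ((lapHeatK n τ x : ℝ) : ℂ)) := by
        intro x
        rw [← smul_eq_mul, ← Circle.smul_def, smul_smul, ← AddChar.map_add_eq_mul, ← neg_add,
          WithLp.prod_inner_apply]
        simp only [truncK, Set.indicator_of_mem hτ]
        rfl
      simp only [this]
      rw [integral_const_mul, norm_mul, Circle.norm_coe, one_mul, ← Real.fourier_eq
          (fun x : EuclideanSpace ℝ (Fin n) => ((lapHeatK n τ x : ℝ) : ℂ)) ξ.snd,
        fourier_lapHeatK (hε.trans hτ.1), Complex.norm_real, Set.indicator_of_mem hτ, norm_mul,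
        norm_neg, Real.norm_of_nonneg ha0, Real.norm_of_nonneg (Real.exp_pos _).le]
    · simp [truncK, hτ]
  refine (norm_integral_le_integral_norm _).trans ?_
  simp only [e2]
  rw [integral_indicator measurableSet_Ioc, ← intervalIntegral.integral_of_le hL]
  have hder : ∀ τ ∈ Set.uIcc ε L, HasDerivAt (fun τ => -Real.exp (-a * τ))
      (a * Real.exp (-a * τ)) τ := by
    intro τ _
    have := (((hasDerivAt_id τ).const_mul (-a)).exp).neg
    convert! this using 1
    simp [mul_comm]
  rw [intervalIntegral.integral_eq_sub_of_hasDerivAt hder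
    (Continuous.intervalIntegrable (by fun_prop) _ _)]
  have h1 : Real.exp (-a * ε) ≤ 1 := Real.exp_le_one_iff.2 (by nlinarith)
  linarith [Real.exp_pos (-a * L)]

theorem measurable_truncOp {ε L : ℝ} {F : ℝ × EuclideanSpace ℝ (Fin n) → ℂ} (hF : Measurable F) :
    Measurable (truncOp n ε L F) := by
  have : StronglyMeasurable fun q : (ℝ × EuclideanSpace ℝ (Fin n)) × (ℝ × EuclideanSpace ℝ (Fin n)) =>
      truncK n ε L (q.1 - q.2) * F q.2 :=
    (((measurable_truncK ε L).comp (measurable_fst.sub measurable_snd)).mul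
      (hF.comp measurable_snd)).stronglyMeasurable
  exact this.integral_prod_right.measurable

open scoped Convolution in
theorem eLpNorm_truncOp_le {ε L : ℝ} (hε : 0 < ε) (hL : ε ≤ L)
    {F : ℝ × EuclideanSpace ℝ (Fin n) → ℂ} (hF : Measurable F) (h1 : Integrable F)
    (h2 : MemLp F 2) : eLpNorm (truncOp n ε L F) 2 ≤ eLpNorm F 2 := by
  have hmp := WithLp.volume_preserving_ofLp ℝ (EuclideanSpace ℝ (Fin n))
  have hme : MeasurableEmbedding
      (WithLp.ofLp : WithLp 2 (ℝ × EuclideanSpace ℝ (Fin n)) → ℝ × EuclideanSpace ℝ (Fin n)) :=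
    (MeasurableEquiv.toLp 2 (ℝ × EuclideanSpace ℝ (Fin n))).symm.measurableEmbedding
  obtain ⟨B, -, hB⟩ := exists_norm_truncK_le' (n := n) hε (hε.trans_le hL)
  have key := eLpNorm_convolution_le (V := WithLp 2 (ℝ × EuclideanSpace ℝ (Fin n)))
    (κ := truncK n ε L ∘ WithLp.ofLp) (f := F ∘ WithLp.ofLp)
    ((hmp.integrable_comp_emb hme).2 (integrable_truncK hε (hε.trans_le hL)))
    (fun v => hB _) (norm_fourier_truncK_le hε hL)
    ((hmp.integrable_comp_emb hme).2 h1) (h2.comp_measurePreserving hmp)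
  have e : ((truncK n ε L ∘ WithLp.ofLp (p := 2)) ⋆[ContinuousLinearMap.mul ℂ ℂ]
      (F ∘ WithLp.ofLp (p := 2))) = truncOp n ε L F ∘ WithLp.ofLp (p := 2) := by
    ext v : 1
    rw [convolution_mul_swap, Function.comp_apply, truncOp]
    exact hmp.integral_comp hme
      (fun w : ℝ × EuclideanSpace ℝ (Fin n) => truncK n ε L (WithLp.ofLp v - w) * F w)
  rw [e, eLpNorm_comp_measurePreserving (measurable_truncOp hF).aestronglyMeasurable hmp,
    eLpNorm_comp_measurePreserving hF.aestronglyMeasurable hmp] at key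
  exact key

/-- For `t ≤ L` the truncated convolution is the integral defining `maxReg`, restricted to
`s < t - ε`. -/
theorem truncOp_eq {ε L : ℝ} (hε : 0 < ε) (hL : 0 < L)
    {F : ℝ × EuclideanSpace ℝ (Fin n) → ℂ} (h1 : Integrable F)
    (hsupp : ∀ z, z.1 < 0 → F z = 0) {t : ℝ} (htL : t ≤ L) (x : EuclideanSpace ℝ (Fin n)) :
    truncOp n ε L F (t, x) = ∫ s in Set.Ioc (0:ℝ) t,
      (Set.Iio (t - ε)).indicator (fun s => lapHeatOp n (t - s) (fun y => F (s, y)) x) s := by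
  obtain ⟨B, -, hB⟩ := exists_norm_truncK_le' (n := n) hε hL
  have h_int : Integrable fun w => truncK n ε L ((t, x) - w) * F w := by
    refine (h1.norm.const_mul B).mono' ?_ (ae_of_all _ fun w => ?_)
    · exact ((measurable_truncK ε L).comp (measurable_const.sub measurable_id)).aestronglyMeasurable.mul
        h1.1
    · rw [norm_mul]; gcongr; exact hB _
  rw [truncOp, Measure.volume_eq_prod, integral_prod _ h_int, ← integral_indicator measurableSet_Ioc]
  refine integral_congr_ae ?_
  filter_upwards [compl_mem_ae_iff.2 (measure_singleton (0:ℝ))] with s hs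
  have hs0 : s ≠ 0 := hs
  by_cases hst : s ∈ Set.Ioc 0 t
  · rw [Set.indicator_of_mem hst]
    by_cases hse : s < t - ε
    · rw [Set.indicator_of_mem (show s ∈ Set.Iio (t - ε) from hse), lapHeatOp]
      have : t - s ∈ Set.Ioc ε L := ⟨by linarith, by linarith [hst.1]⟩
      simp [truncK, this.1, this.2]
    · rw [Set.indicator_of_notMem (show s ∉ Set.Iio (t - ε) from hse)]
      have : ¬ (ε < t - s) := by intro h; apply hse; linarith
      simp [truncK, this]
  · rw [Set.indicator_of_notMem hst]
    rcases lt_or_gt_of_ne hs0 with h | h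
    · simp [hsupp (s, _) h]
    · have : ¬ (ε < t - s) := by intro h'; exact hst ⟨h, by linarith⟩
      simp [truncK, this]

/-- Convergence of the truncations where the integral defining `maxReg` converges; elsewhere
`maxReg` takes the junk value `0`. -/
theorem enorm_maxReg_sq_le {L : ℝ} (hL : 0 < L)
    {F : ℝ × EuclideanSpace ℝ (Fin n) → ℂ} (h1 : Integrable F)
    (hsupp : ∀ z, z.1 < 0 → F z = 0) {t : ℝ} (htL : t ≤ L) (x : EuclideanSpace ℝ (Fin n)) :
    ‖maxReg n F (t, x)‖ₑ ^ 2 ≤ Filter.liminf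
      (fun k : ℕ => ‖truncOp n (L / (k + 1)) L F (t, x)‖ₑ ^ 2) Filter.atTop := by
  by_cases h_int : IntegrableOn (fun s => lapHeatOp n (t - s) (fun y => F (s, y)) x) (Set.Ioc 0 t)
  swap
  · rw [maxReg, integral_undef h_int]; simp
  refine (Filter.Tendsto.liminf_eq ?_).ge
  have hpos : ∀ k : ℕ, 0 < L / ((k : ℝ) + 1) := fun k => by positivity
  simp only [truncOp_eq (hpos _) hL h1 hsupp htL]
  refine ((ENNReal.continuous_pow 2).tendsto _).comp ((continuous_enorm.tendsto _).comp ?_)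
  refine tendsto_integral_of_dominated_convergence
    (fun s => ‖lapHeatOp n (t - s) (fun y => F (s, y)) x‖)
    (fun k => h_int.1.indicator measurableSet_Iio) h_int.norm
    (fun k => ae_of_all _ fun s => norm_indicator_le_norm_self _ _) ?_
  filter_upwards [ae_restrict_mem measurableSet_Ioc,
    ae_restrict_of_ae (compl_mem_ae_iff.2 (measure_singleton t))] with s hs hst
  have hlt : s < t := lt_of_le_of_ne hs.2 hst
  refine tendsto_const_nhds.congr' ?_
  have hlim : Filter.Tendsto (fun k : ℕ => L / ((k : ℝ) + 1)) Filter.atTop (nhds 0) := by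
    simpa [div_eq_mul_inv] using (tendsto_one_div_add_atTop_nhds_zero_nat (𝕜 := ℝ)).const_mul L
  filter_upwards [hlim.eventually_lt_const (sub_pos.2 hlt)] with k hk
  rw [Set.indicator_of_mem (show s ∈ Set.Iio _ by simp only [Set.mem_Iio]; linarith)]

theorem eLpNorm_two_sq {α : Type*} {m : MeasurableSpace α} {μ : Measure α} (f : α → ℂ) :
    eLpNorm f 2 μ ^ 2 = ∫⁻ z, ‖f z‖ₑ ^ 2 ∂μ := by
  have := eLpNorm_nnreal_pow_eq_lintegral (μ := μ) (f := f) (p := 2) (by norm_num)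
  simpa using this

/-- De Simon's theorem: `M⁺` is a contraction on `L²`, here for data in `L¹ ∩ L²`. -/
theorem deSimon {L : ℝ} (hL : 0 < L)
    {F : ℝ × EuclideanSpace ℝ (Fin n) → ℂ} (hF : Measurable F) (h1 : Integrable F)
    (h2 : MemLp F 2) (hsupp : ∀ z, z.1 < 0 → F z = 0) :
    ∫⁻ z in Set.Icc (0:ℝ) L ×ˢ Set.univ, ‖maxReg n F z‖ₑ ^ 2 ≤ ∫⁻ z, ‖F z‖ₑ ^ 2 := by
  have hpos : ∀ k : ℕ, 0 < L / ((k : ℝ) + 1) := fun k => by positivity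
  calc ∫⁻ z in Set.Icc (0:ℝ) L ×ˢ Set.univ, ‖maxReg n F z‖ₑ ^ 2
      ≤ ∫⁻ z in Set.Icc (0:ℝ) L ×ˢ Set.univ, Filter.liminf
          (fun k : ℕ => ‖truncOp n (L / (k + 1)) L F z‖ₑ ^ 2) Filter.atTop :=
        setLIntegral_mono' (measurableSet_Icc.prod .univ)
          fun z hz => enorm_maxReg_sq_le hL h1 hsupp hz.1.2 z.2
    _ ≤ ∫⁻ z, Filter.liminf
          (fun k : ℕ => ‖truncOp n (L / (k + 1)) L F z‖ₑ ^ 2) Filter.atTop :=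
        setLIntegral_le_lintegral _ _
    _ ≤ Filter.liminf (fun k : ℕ => ∫⁻ z, ‖truncOp n (L / (k + 1)) L F z‖ₑ ^ 2) Filter.atTop :=
        lintegral_liminf_le fun k => ((measurable_truncOp hF).enorm.pow_const 2)
    _ ≤ Filter.liminf (fun _ : ℕ => ∫⁻ z, ‖F z‖ₑ ^ 2) Filter.atTop := by
        refine Filter.liminf_le_liminf (Filter.Eventually.of_forall fun k => ?_)
        simp only [← eLpNorm_two_sq]
        gcongr
        refine eLpNorm_truncOp_le (hpos k) ?_ hF h1 h2
        exact div_le_self hL.le (by linarith [(Nat.cast_nonneg k : (0:ℝ) ≤ k)])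
    _ = _ := by simp

end DeSimon

/-! ### Far-field estimates -/

section FarField

variable {n : ℕ}

/-- The dyadic annulus `B(x₀, 2^{j+1}R) \ B(x₀, 2^jR)`. -/
def annulus (x₀ : EuclideanSpace ℝ (Fin n)) (R : ℝ) (j : ℕ) : Set (EuclideanSpace ℝ (Fin n)) :=
  ball x₀ (2 ^ (j+1) * R) \ ball x₀ (2 ^ j * R)

theorem measurableSet_annulus (x₀ : EuclideanSpace ℝ (Fin n)) (R : ℝ) (j : ℕ) :
    MeasurableSet (annulus x₀ R j) := measurableSet_ball.diff measurableSet_ball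

/-- The integral defining `M⁺F(t, x)` with absolute values inside and `y` restricted to `S`. It takes
values in `[0, ∞]`, so no convergence is presupposed. -/
noncomputable def absPot (n : ℕ) (S : Set (EuclideanSpace ℝ (Fin n)))
    (F : ℝ × EuclideanSpace ℝ (Fin n) → ℂ) (t : ℝ) (x : EuclideanSpace ℝ (Fin n)) : ℝ≥0∞ :=
  ∫⁻ s in Set.Ioc 0 t, ∫⁻ y in S, ‖lapHeatK n (t - s) (x - y)‖ₑ * ‖F (s, y)‖ₑ

/-- The volume of the unit ball of `ℝⁿ`. -/
noncomputable def ballVol (n : ℕ) : ℝ := (volume (ball (0 : EuclideanSpace ℝ (Fin n)) 1)).toReal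

theorem ballVol_pos : 0 < ballVol n :=
  ENNReal.toReal_pos (measure_ball_pos _ _ one_pos).ne' measure_ball_lt_top.ne

theorem volume_ball_eq (x : EuclideanSpace ℝ (Fin n)) {r : ℝ} (hr : 0 < r) :
    volume (ball x r) = ENNReal.ofReal (r ^ n * ballVol n) := by
  rw [Measure.addHaar_ball_of_pos _ _ hr, finrank_euclideanSpace, Fintype.card_fin,
    ENNReal.ofReal_mul (by positivity), ballVol, ENNReal.ofReal_toReal measure_ball_lt_top.ne]

/-- The kernel bound on the `j`-th annulus times the square root of the volume of
`[0, R²] × B(x₀, 2^{j+1}R)`, with the powers of `R` and `2^j` collected. -/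
theorem rpow_bookkeeping {R ω : ℝ} (hR : 0 < R) (hω : 0 < ω) (c N : ℝ) (j : ℕ) :
    c * (R ^ 2) ^ (N - n / 2 - 1) * (2 ^ j * R / 2) ^ (-(2 * N)) *
        (R ^ 2 * ((2 ^ (j + 1) * R) ^ n * ω)) ^ (1 / 2 : ℝ)
      = (c * 2 ^ (2 * N + n / 2) * ω ^ (1 / 2 : ℝ)) * R ^ (-((n:ℝ) + 2) / 2) *
        (2 ^ j) ^ (-(2 * N - n / 2)) := by
  -- Writing every base as an exponential makes the identity linear in the exponents.
  obtain ⟨r, rfl⟩ : ∃ r, R = Real.exp r := ⟨_, (Real.exp_log hR).symm⟩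
  obtain ⟨w, rfl⟩ : ∃ w, ω = Real.exp w := ⟨_, (Real.exp_log hω).symm⟩
  obtain ⟨l, hl⟩ : ∃ l, (2:ℝ) = Real.exp l := ⟨_, (Real.exp_log two_pos).symm⟩
  have e1 : (Real.exp r) ^ 2 = Real.exp (2 * r) := by rw [← Real.exp_nat_mul]; norm_num
  have e2 : (2:ℝ) ^ j = Real.exp (j * l) := by rw [hl, ← Real.exp_nat_mul]
  have e3 : (2:ℝ) ^ (j + 1) = Real.exp ((j + 1) * l) := by
    rw [hl, ← Real.exp_nat_mul]; push_cast; rfl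
  have e4 : Real.exp (j * l) * Real.exp r / 2 = Real.exp (j * l + r - l) := by
    rw [Real.exp_sub, Real.exp_add, ← hl]
  have e5 : (2:ℝ) ^ (2 * N + n / 2) = Real.exp (l * (2 * N + n / 2)) := by
    rw [Real.exp_mul, ← hl]
  rw [e1, e2, e3, e4, e5, ← Real.exp_add, ← Real.exp_nat_mul]
  simp only [mul_assoc, ← Real.exp_mul, ← Real.exp_add]
  congr 2
  ring

theorem lintegral_enorm_le_sqrt {α : Type*} [MeasurableSpace α] {μ : Measure α} {f : α → ℂ}
    (hf : Measurable f) :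
    ∫⁻ z, ‖f z‖ₑ ∂μ ≤ (μ Set.univ) ^ (1 / 2 : ℝ) * (∫⁻ z, ‖f z‖ₑ ^ 2 ∂μ) ^ (1 / 2 : ℝ) := by
  have := ENNReal.lintegral_mul_le_Lp_mul_Lq μ Real.HolderConjugate.two_two
    (aemeasurable_const (b := (1 : ℝ≥0∞))) hf.enorm.aemeasurable
  simpa using this

/-- The far-field estimate: the kernel is bounded uniformly on the annulus, because `N ≥ n/2 + 1`
makes the power of `t - s` nonnegative, and Cauchy–Schwarz handles `F`. -/
theorem exists_absPot_annulus_le (n : ℕ) {N : ℝ} (hN0 : 0 < N) (hN : (n:ℝ) / 2 + 1 ≤ N) :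
    ∃ c : ℝ, 0 < c ∧ ∀ (x₀ : EuclideanSpace ℝ (Fin n)) (R : ℝ) (j : ℕ)
      (F : ℝ × EuclideanSpace ℝ (Fin n) → ℂ), 0 < R → 1 ≤ j → Measurable F →
      ∀ t ≤ R ^ 2, ∀ x ∈ ball x₀ R,
        absPot n (annulus x₀ R j) F t x ≤
          ENNReal.ofReal (c * R ^ (-((n:ℝ) + 2) / 2) * (2 ^ j) ^ (-(2 * N - n / 2))) *
            (∫⁻ z in Set.Icc (0:ℝ) (R ^ 2) ×ˢ annulus x₀ R j, ‖F z‖ₑ ^ 2) ^ (1 / 2 : ℝ) := by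
  obtain ⟨c, hc, hk⟩ := exists_lapHeatK_le n hN0
  have hω := ballVol_pos (n := n)
  refine ⟨c * 2 ^ (2 * N + n / 2) * ballVol n ^ (1 / 2 : ℝ), by positivity,
    fun x₀ R j F hR hj hF t ht x hx => ?_⟩
  set b := c * (R ^ 2) ^ (N - n / 2 - 1) * (2 ^ j * R / 2) ^ (-(2 * N)) with hb
  have hb0 : 0 ≤ b := by positivity
  have hkb : ∀ s ∈ Set.Ioc 0 t, ∀ y ∈ annulus x₀ R j,
      ‖lapHeatK n (t - s) (x - y)‖ₑ ≤ ENNReal.ofReal b := by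
    intro s hs y hy
    rw [← ofReal_norm, Real.norm_eq_abs]
    refine ENNReal.ofReal_le_ofReal ?_
    rcases hs.2.eq_or_lt with rfl | hst
    -- At `s = t` division by zero makes the kernel vanish.
    · simpa [lapHeatK] using hb0
    have h2j : (2:ℝ) ≤ 2 ^ j := by simpa using pow_le_pow_right₀ (one_le_two (α := ℝ)) hj
    have hd : 2 ^ j * R / 2 ≤ ‖x - y‖ := by
      have h1 : 2 ^ j * R ≤ dist y x₀ := by simpa using hy.2
      have h2 : dist x x₀ < R := hx
      have h3 := dist_triangle_left y x₀ x
      rw [← dist_eq_norm]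
      nlinarith
    have hpos : 0 < 2 ^ j * R / 2 := by positivity
    refine (hk _ (sub_pos.2 hst) _ (norm_pos_iff.1 (hpos.trans_le hd))).trans ?_
    rw [hb]
    have hts : t - s ≤ R ^ 2 := by linarith [hs.1]
    have e1 := Real.rpow_le_rpow (sub_pos.2 hst).le hts (by linarith : 0 ≤ N - n / 2 - 1)
    have e2 := Real.rpow_le_rpow_of_nonpos hpos hd (by linarith : -(2 * N) ≤ 0)
    gcongr
  have hA := measurableSet_annulus x₀ R j
  have hvol : volume (Set.Icc (0:ℝ) (R ^ 2) ×ˢ annulus x₀ R j) ≤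
      ENNReal.ofReal (R ^ 2 * ((2 ^ (j + 1) * R) ^ n * ballVol n)) := by
    rw [Measure.volume_eq_prod, Measure.prod_prod, Real.volume_Icc, sub_zero,
      ENNReal.ofReal_mul (by positivity), ← volume_ball_eq x₀ (by positivity)]
    exact mul_le_mul_right (measure_mono Set.sdiff_subset) _
  have hFm : Measurable fun z => ‖F z‖ₑ := hF.enorm
  calc absPot n (annulus x₀ R j) F t x
      ≤ ∫⁻ s in Set.Ioc 0 t, ∫⁻ y in annulus x₀ R j, ENNReal.ofReal b * ‖F (s, y)‖ₑ :=
        setLIntegral_mono' measurableSet_Ioc fun s hs => setLIntegral_mono' hA fun y hy =>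
          mul_le_mul_left (hkb s hs y hy) _
    _ ≤ ∫⁻ s in Set.Icc 0 (R ^ 2), ∫⁻ y in annulus x₀ R j, ENNReal.ofReal b * ‖F (s, y)‖ₑ :=
        lintegral_mono_set fun s hs => ⟨hs.1.le, hs.2.trans ht⟩
    _ = ENNReal.ofReal b * ∫⁻ z in Set.Icc (0:ℝ) (R ^ 2) ×ˢ annulus x₀ R j, ‖F z‖ₑ := by
        rw [← lintegral_const_mul _ hFm, Measure.volume_eq_prod,
          setLIntegral_prod _ (hFm.const_mul _).aemeasurable]
    _ ≤ ENNReal.ofReal b * (ENNReal.ofReal (R ^ 2 * ((2 ^ (j + 1) * R) ^ n * ballVol n))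
          ^ (1 / 2 : ℝ) *
        (∫⁻ z in Set.Icc (0:ℝ) (R ^ 2) ×ˢ annulus x₀ R j, ‖F z‖ₑ ^ 2) ^ (1 / 2 : ℝ)) := by
        refine mul_le_mul_right ((lintegral_enorm_le_sqrt hF).trans ?_) _
        rw [Measure.restrict_apply_univ]
        exact mul_le_mul_left (ENNReal.rpow_le_rpow hvol (by norm_num)) _
    _ = _ := by
        rw [ENNReal.ofReal_rpow_of_nonneg (by positivity) (by norm_num), ← mul_assoc,
          ← ENNReal.ofReal_mul hb0, hb, rpow_bookkeeping hR hω]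

theorem enorm_maxReg_le_absPot (F : ℝ × EuclideanSpace ℝ (Fin n) → ℂ)
    {S : Set (EuclideanSpace ℝ (Fin n))} (hS : MeasurableSet S)
    (hF : ∀ z, z.2 ∉ S → F z = 0) (z : ℝ × EuclideanSpace ℝ (Fin n)) :
    ‖maxReg n F z‖ₑ ≤ absPot n S F z.1 z.2 := by
  refine (enorm_integral_le_lintegral_enorm _).trans (lintegral_mono fun s => ?_)
  refine (enorm_integral_le_lintegral_enorm _).trans (le_of_eq ?_)
  rw [← lintegral_indicator hS]
  refine lintegral_congr fun y => ?_
  by_cases hy : y ∈ S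
  · rw [Set.indicator_of_mem hy, enorm_mul]
    congr 1
    simp [← ofReal_norm]
  · simp [hy, hF (s, y) hy]

/-- The off-diagonal estimate for `M⁺`. -/
theorem offdiag (n : ℕ) {M : ℝ} (hM : (n:ℝ) / 4 < M) :
    ∃ C' : ℝ, 0 < C' ∧
      ∀ (x₀ : EuclideanSpace ℝ (Fin n)) (R : ℝ) (j : ℕ)
        (F : ℝ × EuclideanSpace ℝ (Fin n) → ℂ),
        0 < R → 1 ≤ j → Measurable F →
        (∀ z, z ∉ Set.Icc (0:ℝ) (R ^ 2) ×ˢ annulus x₀ R j → F z = 0) →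
        (∫⁻ z in Set.Icc (0:ℝ) (R ^ 2) ×ˢ ball x₀ R, ‖maxReg n F z‖ₑ ^ 2)
          ≤ ENNReal.ofReal (C' * 2 ^ (-(4 * M * (j:ℝ)))) *
              ∫⁻ z in Set.Icc (0:ℝ) (R ^ 2) ×ˢ (Set.univ : Set (EuclideanSpace ℝ (Fin n))),
                ‖F z‖ₑ ^ 2 := by
  have hn0 : (0:ℝ) ≤ n := Nat.cast_nonneg n
  obtain ⟨c, hc, h⟩ := exists_absPot_annulus_le n (N := M + n / 2 + 1) (by linarith) (by linarith)
  have hω := ballVol_pos (n := n)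
  refine ⟨c ^ 2 * ballVol n, by positivity, fun x₀ R j F hR hj hF hsupp => ?_⟩
  set D := c * R ^ (-((n:ℝ) + 2) / 2) * (2 ^ j) ^ (-(2 * (M + n / 2 + 1) - n / 2)) with hD
  have hD0 : 0 ≤ D := by positivity
  set J := ∫⁻ z in Set.Icc (0:ℝ) (R ^ 2) ×ˢ annulus x₀ R j, ‖F z‖ₑ ^ 2 with hJ
  have key : ∀ z ∈ Set.Icc (0:ℝ) (R ^ 2) ×ˢ ball x₀ R,
      ‖maxReg n F z‖ₑ ^ 2 ≤ ENNReal.ofReal (D ^ 2) * J := by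
    intro z hz
    have h1 := (enorm_maxReg_le_absPot F (measurableSet_annulus x₀ R j)
      (fun z hz => hsupp z fun h => hz h.2) z).trans (h x₀ R j F hR hj hF z.1 hz.1.2 z.2 hz.2)
    refine (pow_le_pow_left₀ zero_le h1 2).trans (le_of_eq ?_)
    rw [mul_pow, ← ENNReal.ofReal_pow hD0, ← ENNReal.rpow_natCast, ← ENNReal.rpow_mul]
    norm_num [hJ]
  have hDR : D ^ 2 * (R ^ 2 * (R ^ n * ballVol n)) ≤
      c ^ 2 * ballVol n * 2 ^ (-(4 * M * (j:ℝ))) := by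
    have e1 : (R ^ (-((n:ℝ) + 2) / 2)) ^ 2 * (R ^ 2 * R ^ n) = 1 := by
      rw [← Real.rpow_natCast, ← Real.rpow_mul hR.le, ← Real.rpow_natCast R 2,
        ← Real.rpow_natCast R n, ← Real.rpow_add hR, ← Real.rpow_add hR]
      convert Real.rpow_zero R using 2
      push_cast; ring
    have e2 : (((2:ℝ) ^ j) ^ (-(2 * (M + n / 2 + 1) - n / 2))) ^ 2 ≤ 2 ^ (-(4 * M * (j:ℝ))) := by
      rw [← Real.rpow_natCast 2 j, ← Real.rpow_mul two_pos.le,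
        ← Real.rpow_natCast _ 2, ← Real.rpow_mul two_pos.le]
      refine Real.rpow_le_rpow_of_exponent_le one_le_two ?_
      have : (0:ℝ) ≤ j * n := by positivity
      have : (0:ℝ) ≤ j := by positivity
      push_cast
      nlinarith
    calc _ = c ^ 2 * ballVol n * ((R ^ (-((n:ℝ) + 2) / 2)) ^ 2 * (R ^ 2 * R ^ n)) *
          (((2:ℝ) ^ j) ^ (-(2 * (M + n / 2 + 1) - n / 2))) ^ 2 := by rw [hD]; ring
      _ ≤ _ := by rw [e1, mul_one]; gcongr
  calc _ ≤ ∫⁻ z in Set.Icc (0:ℝ) (R ^ 2) ×ˢ ball x₀ R, ENNReal.ofReal (D ^ 2) * J :=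
        setLIntegral_mono' (measurableSet_Icc.prod measurableSet_ball) key
    _ = ENNReal.ofReal (D ^ 2 * (R ^ 2 * (R ^ n * ballVol n))) * J := by
        rw [setLIntegral_const, Measure.volume_eq_prod, Measure.prod_prod, Real.volume_Icc,
          sub_zero, volume_ball_eq x₀ hR, ← ENNReal.ofReal_mul (by positivity),
          mul_right_comm, ← ENNReal.ofReal_mul (by positivity)]
    _ ≤ _ := by
        refine mul_le_mul' (ENNReal.ofReal_le_ofReal hDR) (lintegral_mono_set ?_)
        exact Set.prod_mono subset_rfl (Set.subset_univ _)

/-! ### Boundedness on the tent space -/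

theorem lintegral_le_tentNorm2 (F : ℝ × EuclideanSpace ℝ (Fin n) → ℂ)
    (x₀ : EuclideanSpace ℝ (Fin n)) {R : ℝ} (hR : 0 < R) :
    ∫⁻ z in Set.Icc (0:ℝ) (R ^ 2) ×ˢ ball x₀ R, ‖F z‖ₑ ^ 2 ≤
      ENNReal.ofReal (R ^ n * ballVol n) * tentNorm2 n F ^ 2 := by
  have hω := ballVol_pos (n := n)
  have h : ((volume (ball x₀ R))⁻¹ * ∫⁻ z in Set.Icc (0:ℝ) (R ^ 2) ×ˢ ball x₀ R,
      ENNReal.ofReal (‖F z‖ ^ 2)) ^ (1/2 : ℝ) ≤ tentNorm2 n F :=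
    le_iSup_of_le x₀ (le_iSup_of_le R (le_iSup_of_le hR le_rfl))
  have h2 := pow_le_pow_left₀ zero_le h 2
  rw [← ENNReal.rpow_natCast, ← ENNReal.rpow_mul] at h2
  norm_num at h2
  rw [← ENNReal.inv_mul_le_iff (by simp; positivity) ENNReal.ofReal_ne_top,
    ← volume_ball_eq x₀ hR]
  simpa [ENNReal.ofReal_pow] using h2

theorem tentNorm2_le {F : ℝ × EuclideanSpace ℝ (Fin n) → ℂ} {B : ℝ≥0∞}
    (h : ∀ (x₀ : EuclideanSpace ℝ (Fin n)) (R : ℝ), 0 < R →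
      ∫⁻ z in Set.Icc (0:ℝ) (R ^ 2) ×ˢ ball x₀ R, ‖F z‖ₑ ^ 2 ≤
        ENNReal.ofReal (R ^ n * ballVol n) * B ^ 2) :
    tentNorm2 n F ≤ B := by
  have hω := ballVol_pos (n := n)
  refine iSup_le fun x₀ => iSup_le fun R => iSup_le fun hR => ?_
  have h1 := h x₀ R hR
  rw [← ENNReal.inv_mul_le_iff (by simp; positivity) ENNReal.ofReal_ne_top,
    ← volume_ball_eq x₀ hR] at h1
  have h2 := ENNReal.rpow_le_rpow h1 (by norm_num : (0:ℝ) ≤ 1 / 2)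
  rw [← ENNReal.rpow_natCast, ← ENNReal.rpow_mul] at h2
  norm_num at h2
  simpa [ENNReal.ofReal_pow] using h2

theorem measurable_absPot_integrand {F : ℝ × EuclideanSpace ℝ (Fin n) → ℂ} (hF : Measurable F)
    (t : ℝ) (x : EuclideanSpace ℝ (Fin n)) :
    Measurable fun p : ℝ × EuclideanSpace ℝ (Fin n) =>
      ‖lapHeatK n (t - p.1) (x - p.2)‖ₑ * ‖F (p.1, p.2)‖ₑ := by
  have h : Measurable fun p : ℝ × EuclideanSpace ℝ (Fin n) => lapHeatK n (t - p.1) (x - p.2) :=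
    measurable_lapHeatK.comp (by fun_prop : Measurable fun p : ℝ × EuclideanSpace ℝ (Fin n) =>
      (t - p.1, x - p.2))
  exact h.enorm.mul hF.enorm

theorem compl_ball_subset_iUnion_annulus (x₀ : EuclideanSpace ℝ (Fin n)) {R : ℝ} (hR : 0 < R) :
    (ball x₀ (2 * R))ᶜ ⊆ ⋃ i : ℕ, annulus x₀ R (i + 1) := by
  intro y hy
  have hy' : 2 * R ≤ dist y x₀ := by simpa using hy
  have h2 : 2 ≤ dist y x₀ / R := by rwa [le_div_iff₀ hR]
  obtain ⟨j, h3, h4⟩ := exists_nat_pow_near (by linarith : 1 ≤ dist y x₀ / R) one_lt_two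
  rw [le_div_iff₀ hR] at h3
  have h4' := h4
  rw [div_lt_iff₀ hR] at h4'
  rcases j with _ | i
  · norm_num at h4; linarith
  · exact Set.mem_iUnion.2 ⟨i, by simpa [annulus] using ⟨h4', h3⟩⟩

/-- The coefficient from `exists_absPot_annulus_le` with `N = n/2 + 1`, times the square root of the
volume of `B(x₀, 2^{i+2}R)`, for the annulus `j = i + 1`. -/
theorem tail_bookkeeping {R ω : ℝ} (hR : 0 < R) (hω : 0 < ω) (c : ℝ) (i : ℕ) :
    c * R ^ (-((n:ℝ) + 2) / 2) * (2 ^ (i + 1)) ^ (-(2 * ((n:ℝ) / 2 + 1) - n / 2)) *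
        ((2 ^ (i + 1 + 1) * R) ^ n * ω) ^ (1 / 2 : ℝ)
      = (c * 2 ^ ((n:ℝ) / 2) * ω ^ (1 / 2 : ℝ) / 4 / R) * (1 / 4) ^ i := by
  obtain ⟨r, rfl⟩ : ∃ r, R = Real.exp r := ⟨_, (Real.exp_log hR).symm⟩
  obtain ⟨w, rfl⟩ : ∃ w, ω = Real.exp w := ⟨_, (Real.exp_log hω).symm⟩
  obtain ⟨l, hl⟩ : ∃ l, (2:ℝ) = Real.exp l := ⟨_, (Real.exp_log two_pos).symm⟩
  have e2 : (2:ℝ) ^ (i + 1) = Real.exp ((i + 1) * l) := by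
    rw [hl, ← Real.exp_nat_mul]; push_cast; rfl
  have e3 : (2:ℝ) ^ (i + 1 + 1) = Real.exp ((i + 1 + 1) * l) := by
    rw [hl, ← Real.exp_nat_mul]; push_cast; rfl
  have e4 : (1 / 4 : ℝ) = Real.exp (-(2 * l)) := by
    rw [Real.exp_neg, two_mul, Real.exp_add, ← hl]; norm_num
  have e5 : (2:ℝ) ^ ((n:ℝ) / 2) = Real.exp (l * (n / 2)) := by
    rw [Real.exp_mul, ← hl]
  have e6 : ∀ a : ℝ, a / 4 / Real.exp r = a * Real.exp (-(2 * l)) * Real.exp (-r) := by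
    intro a; rw [← e4, Real.exp_neg]; ring
  rw [e6, e2, e3, e4, e5, ← Real.exp_add, ← Real.exp_nat_mul, ← Real.exp_nat_mul]
  simp only [mul_assoc, ← Real.exp_mul, ← Real.exp_add]
  congr 2
  ring

theorem exists_absPot_compl_ball_le (n : ℕ) :
    ∃ c : ℝ, 0 < c ∧ ∀ (x₀ : EuclideanSpace ℝ (Fin n)) (R : ℝ)
      (F : ℝ × EuclideanSpace ℝ (Fin n) → ℂ), 0 < R → Measurable F →
      ∀ t ≤ R ^ 2, ∀ x ∈ ball x₀ R,
        absPot n (ball x₀ (2 * R))ᶜ F t x ≤ ENNReal.ofReal (c / R) * tentNorm2 n F := by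
  obtain ⟨c, hc, h⟩ := exists_absPot_annulus_le n (N := n / 2 + 1) (by positivity) le_rfl
  have hω := ballVol_pos (n := n)
  set K := c * 2 ^ ((n:ℝ) / 2) * ballVol n ^ (1 / 2 : ℝ) / 4 with hK
  have hK0 : 0 < K := by positivity
  refine ⟨K * (1 - 1 / 4)⁻¹, by positivity, fun x₀ R F hR hF t ht x hx => ?_⟩
  have hterm : ∀ i : ℕ, absPot n (annulus x₀ R (i + 1)) F t x ≤
      ENNReal.ofReal (K / R * (1 / 4) ^ i) * tentNorm2 n F := by
    intro i
    have hr : 0 < 2 ^ (i + 1 + 1) * R := by positivity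
    have hR' : R ≤ 2 ^ (i + 1 + 1) * R := le_mul_of_one_le_left hR.le (one_le_pow₀ one_le_two)
    have hJ : (∫⁻ z in Set.Icc (0:ℝ) (R ^ 2) ×ˢ annulus x₀ R (i + 1), ‖F z‖ₑ ^ 2) ≤
        ENNReal.ofReal ((2 ^ (i + 1 + 1) * R) ^ n * ballVol n) * tentNorm2 n F ^ 2 := by
      refine le_trans (lintegral_mono_set ?_) (lintegral_le_tentNorm2 F x₀ hr)
      exact Set.prod_mono (Set.Icc_subset_Icc_right (pow_le_pow_left₀ hR.le hR' 2))
        Set.sdiff_subset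
    refine (h x₀ R (i + 1) F hR (by omega) hF t ht x hx).trans ?_
    refine (mul_le_mul_right (ENNReal.rpow_le_rpow hJ (by norm_num)) _).trans (le_of_eq ?_)
    rw [ENNReal.mul_rpow_of_nonneg _ _ (by norm_num), ← ENNReal.rpow_natCast (tentNorm2 n F) 2,
      ← ENNReal.rpow_mul, ENNReal.ofReal_rpow_of_nonneg (by positivity) (by norm_num), ← mul_assoc,
      ← ENNReal.ofReal_mul (by positivity), tail_bookkeeping hR hω]
    norm_num [hK]
  have hmeas := measurable_absPot_integrand hF t x
  calc absPot n (ball x₀ (2 * R))ᶜ F t x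
      ≤ ∫⁻ s in Set.Ioc 0 t, ∑' i : ℕ, ∫⁻ y in annulus x₀ R (i + 1),
          ‖lapHeatK n (t - s) (x - y)‖ₑ * ‖F (s, y)‖ₑ :=
        lintegral_mono fun s => (lintegral_mono_set (compl_ball_subset_iUnion_annulus x₀ hR)).trans
          (lintegral_iUnion_le _ _)
    _ = ∑' i : ℕ, absPot n (annulus x₀ R (i + 1)) F t x :=
        lintegral_tsum fun i => hmeas.lintegral_prod_right'.aemeasurable
    _ ≤ ∑' i : ℕ, ENNReal.ofReal (K / R * (1 / 4) ^ i) * tentNorm2 n F :=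
        ENNReal.tsum_le_tsum hterm
    _ = _ := by
        rw [ENNReal.tsum_mul_right, ← ENNReal.ofReal_tsum_of_nonneg (fun i => by positivity)
          ((summable_geometric_of_lt_one (by norm_num) (by norm_num)).mul_left _), tsum_mul_left,
          tsum_geometric_of_lt_one (by norm_num) (by norm_num)]
        congr 2
        ring

/-- Splitting off the part of `F` over the complement of `S`, whose contribution converges absolutely.
If the integral defining `maxReg` of the local part diverges, so does the one for `F`, and
`maxReg n F (t, x) = 0`. -/
theorem enorm_maxReg_le_add {F : ℝ × EuclideanSpace ℝ (Fin n) → ℂ} (hF : Measurable F) {L : ℝ}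
    {S : Set (EuclideanSpace ℝ (Fin n))} (hS : MeasurableSet S)
    (h_int : Integrable ((Set.Icc (0:ℝ) L ×ˢ S).indicator F)) {t : ℝ} (ht : t ≤ L)
    (x : EuclideanSpace ℝ (Fin n)) (hQ : absPot n Sᶜ F t x ≠ ⊤) :
    ‖maxReg n F (t, x)‖ₑ ≤
      ‖maxReg n ((Set.Icc (0:ℝ) L ×ˢ S).indicator F) (t, x)‖ₑ + absPot n Sᶜ F t x := by
  set F0 := (Set.Icc (0:ℝ) L ×ˢ S).indicator F with hF0
  set F1 : ℝ × EuclideanSpace ℝ (Fin n) → ℂ := (Set.univ ×ˢ Sᶜ).indicator F with hF1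
  have hF1m : Measurable F1 := hF.indicator (MeasurableSet.univ.prod hS.compl)
  have hmeas := measurable_absPot_integrand hF t x
  have hKm : Measurable fun p : ℝ × EuclideanSpace ℝ (Fin n) =>
      ((lapHeatK n (t - p.1) (x - p.2) : ℝ) : ℂ) * F1 p := by
    have h : Measurable fun p : ℝ × EuclideanSpace ℝ (Fin n) => lapHeatK n (t - p.1) (x - p.2) :=
      measurable_lapHeatK.comp (by fun_prop : Measurable fun p : ℝ × EuclideanSpace ℝ (Fin n) =>
        (t - p.1, x - p.2))
    exact (Complex.measurable_ofReal.comp h).mul hF1m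
  have hF1l : ∀ s, ∫⁻ y, ‖((lapHeatK n (t - s) (x - y) : ℝ) : ℂ) * F1 (s, y)‖ₑ =
      ∫⁻ y in Sᶜ, ‖lapHeatK n (t - s) (x - y)‖ₑ * ‖F (s, y)‖ₑ := by
    intro s
    rw [← lintegral_indicator hS.compl]
    refine lintegral_congr fun y => ?_
    by_cases hy : y ∈ S
    · simp [hF1, hy]
    · simp [hF1, hy, ← ofReal_norm]
  set h1 : ℝ → ℂ := fun s => lapHeatOp n (t - s) (fun y => F1 (s, y)) x with hh1
  have h1m : StronglyMeasurable h1 := hKm.stronglyMeasurable.integral_prod_right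
  have h1le : ∫⁻ s in Set.Ioc 0 t, ‖h1 s‖ₑ ≤ absPot n Sᶜ F t x :=
    lintegral_mono fun s => (enorm_integral_le_lintegral_enorm _).trans (hF1l s).le
  have h1int : IntegrableOn h1 (Set.Ioc 0 t) :=
    ⟨h1m.aestronglyMeasurable, h1le.trans_lt hQ.lt_top⟩
  have hsplit : ∀ᵐ s ∂(volume.restrict (Set.Ioc 0 t)),
      lapHeatOp n (t - s) (fun y => F (s, y)) x =
        lapHeatOp n (t - s) (fun y => F0 (s, y)) x + h1 s := by
    have a1 : ∀ᵐ s ∂(volume.restrict (Set.Ioc 0 t)),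
        (∫⁻ y in Sᶜ, ‖lapHeatK n (t - s) (x - y)‖ₑ * ‖F (s, y)‖ₑ) < ⊤ :=
      ae_lt_top hmeas.lintegral_prod_right' hQ
    have a2 : ∀ᵐ s ∂(volume.restrict (Set.Ioc 0 t)), Integrable fun y => F0 (s, y) :=
      ae_restrict_of_ae h_int.prod_right_ae
    filter_upwards [a1, a2, ae_restrict_mem measurableSet_Ioc] with s b1 b2 hs
    have i1 : Integrable fun y => ((lapHeatK n (t - s) (x - y) : ℝ) : ℂ) * F1 (s, y) :=
      ⟨(hKm.comp measurable_prodMk_left).aestronglyMeasurable, by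
        rw [hasFiniteIntegral_iff_enorm, hF1l]; exact b1⟩
    have i0 : Integrable fun y => ((lapHeatK n (t - s) (x - y) : ℝ) : ℂ) * F0 (s, y) := by
      rcases hs.2.eq_or_lt with rfl | hst
      · simp [lapHeatK]
      · obtain ⟨c, hc, hk⟩ := exists_lapHeatK_le_gaussian n (L := t - s) (sub_pos.2 hst)
        refine b2.bdd_mul (c := c) ?_ (Filter.Eventually.of_forall fun y => ?_)
        · exact (Complex.continuous_ofReal.comp ((continuous_lapHeatK (t - s)).comp
            (continuous_const.sub continuous_id))).aestronglyMeasurable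
        · rw [Complex.norm_real, Real.norm_eq_abs]
          refine (hk _ le_rfl le_rfl _).trans (mul_le_of_le_one_right hc.le ?_)
          rw [Real.exp_le_one_iff]
          have : 0 ≤ (8 * (t - s))⁻¹ * ‖x - y‖ ^ 2 := by
            have := sub_pos.2 hst
            positivity
          linarith
    simp only [hh1, lapHeatOp]
    rw [← integral_add i0 i1]
    refine integral_congr_ae (Filter.Eventually.of_forall fun y => ?_)
    have hsL : s ∈ Set.Icc 0 L := ⟨hs.1.le, hs.2.trans ht⟩
    by_cases hy : y ∈ S
    · simp [hF0, hF1, hy, hsL.1, hsL.2]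
    · simp [hF0, hF1, hy]
  by_cases h0 : IntegrableOn (fun s => lapHeatOp n (t - s) (fun y => F0 (s, y)) x) (Set.Ioc 0 t)
  · have e : maxReg n F (t, x) = maxReg n F0 (t, x) + ∫ s in Set.Ioc 0 t, h1 s := by
      rw [maxReg, maxReg, ← integral_add h0 h1int]
      exact integral_congr_ae hsplit
    rw [e]
    exact (enorm_add_le _ _).trans
      (add_le_add_right ((enorm_integral_le_lintegral_enorm _).trans h1le) _)
  · have e : maxReg n F (t, x) = 0 := by
      refine integral_undef fun hi => h0 ?_
      refine (Integrable.sub hi h1int).congr ?_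
      filter_upwards [hsplit] with s hs
      simp [hs]
    simp [e]

/-- `M⁺` is bounded on `T^{∞,2}`. -/
theorem tent_bounded (n : ℕ) : ∃ c : ℝ, 0 < c ∧
    ∀ F : ℝ × EuclideanSpace ℝ (Fin n) → ℂ, Measurable F →
      tentNorm2 n (maxReg n F) ≤ ENNReal.ofReal c * tentNorm2 n F := by
  obtain ⟨c, hc, h⟩ := exists_absPot_compl_ball_le n
  have hω := ballVol_pos (n := n)
  have hC : 0 < 2 * 2 ^ n + 2 * c ^ 2 := by positivity
  -- `2 * 2 ^ n` is the local part on the doubled ball, `2 * c ^ 2` the far part.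
  refine ⟨√(2 * 2 ^ n + 2 * c ^ 2), by positivity, fun F hF => ?_⟩
  rcases eq_or_ne (tentNorm2 n F) ⊤ with hA | hA
  · rw [hA, ENNReal.mul_top (by simpa using hC)]
    exact le_top
  set A := tentNorm2 n F with hAdef
  refine tentNorm2_le fun x₀ R hR => ?_
  set Bx := Set.Icc (0:ℝ) (R ^ 2) ×ˢ ball x₀ (2 * R) with hBx
  have hBm : MeasurableSet Bx := measurableSet_Icc.prod measurableSet_ball
  have hI : ∫⁻ z, ‖Bx.indicator F z‖ₑ ^ 2 ≤ ENNReal.ofReal ((2 * R) ^ n * ballVol n) * A ^ 2 := by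
    refine le_trans (le_of_eq ?_) ((lintegral_mono_set ?_ : ∫⁻ z in Bx, ‖F z‖ₑ ^ 2 ≤ _).trans
      (lintegral_le_tentNorm2 F x₀ (by positivity : 0 < 2 * R)))
    · rw [← lintegral_indicator hBm]
      refine lintegral_congr fun z => ?_
      by_cases hz : z ∈ Bx <;> simp [hz]
    · exact Set.prod_mono (Set.Icc_subset_Icc_right (by nlinarith)) subset_rfl
  have hFm : Measurable (Bx.indicator F) := hF.indicator hBm
  have hL2 : MemLp (Bx.indicator F) 2 := by
    refine ⟨hFm.aestronglyMeasurable, ?_⟩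
    have : eLpNorm (Bx.indicator F) 2 volume ^ 2 < ⊤ := by
      rw [eLpNorm_two_sq]
      exact hI.trans_lt (ENNReal.mul_lt_top ENNReal.ofReal_lt_top (ENNReal.pow_lt_top hA.lt_top))
    exact (ENNReal.pow_lt_top_iff.1 this).resolve_right two_ne_zero
  have hL1 : Integrable (Bx.indicator F) := by
    have : Fact (volume Bx < ⊤) := ⟨by
      rw [hBx, Measure.volume_eq_prod, Measure.prod_prod]
      exact ENNReal.mul_lt_top (by simp) measure_ball_lt_top⟩
    rw [integrable_indicator_iff hBm]
    exact ((memLp_indicator_iff_restrict hBm).1 hL2).integrable one_le_two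
  have hdS := deSimon (n := n) (L := R ^ 2) (by positivity) hFm hL1 hL2 fun z hz =>
    Set.indicator_of_notMem (fun hz' => hz.not_ge hz'.1.1) _
  set q := ENNReal.ofReal (c / R) * A with hq
  have hqt : q ≠ ⊤ := ENNReal.mul_ne_top ENNReal.ofReal_ne_top hA
  have key : ∀ z ∈ Set.Icc (0:ℝ) (R ^ 2) ×ˢ ball x₀ R,
      ‖maxReg n F z‖ₑ ^ 2 ≤ 2 * ‖maxReg n (Bx.indicator F) z‖ₑ ^ 2 + 2 * q ^ 2 := by
    intro z hz
    have hz1 := h x₀ R F hR hF z.1 hz.1.2 z.2 hz.2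
    have h1 := enorm_maxReg_le_add hF (measurableSet_ball (x := x₀) (ε := 2 * R)) hL1 hz.1.2 z.2
      (ne_top_of_le_ne_top hqt hz1)
    refine (pow_le_pow_left₀ zero_le (h1.trans (add_le_add_right hz1 _)) 2).trans ?_
    have h2 := ENNReal.rpow_add_le_mul_rpow_add_rpow ‖maxReg n (Bx.indicator F) z‖ₑ q one_le_two
    norm_num at h2
    rwa [mul_add] at h2
  calc _ ≤ ∫⁻ z in Set.Icc (0:ℝ) (R ^ 2) ×ˢ ball x₀ R,
          (2 * ‖maxReg n (Bx.indicator F) z‖ₑ ^ 2 + 2 * q ^ 2) :=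
        setLIntegral_mono' (measurableSet_Icc.prod measurableSet_ball) key
    _ = 2 * (∫⁻ z in Set.Icc (0:ℝ) (R ^ 2) ×ˢ ball x₀ R, ‖maxReg n (Bx.indicator F) z‖ₑ ^ 2) +
          2 * q ^ 2 * ENNReal.ofReal (R ^ 2 * (R ^ n * ballVol n)) := by
        rw [lintegral_add_right _ measurable_const, lintegral_const_mul' _ _ (by simp),
          setLIntegral_const, Measure.volume_eq_prod, Measure.prod_prod, Real.volume_Icc,
          sub_zero, volume_ball_eq x₀ hR, ← ENNReal.ofReal_mul (by positivity)]
    _ ≤ 2 * (ENNReal.ofReal ((2 * R) ^ n * ballVol n) * A ^ 2) +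
          2 * q ^ 2 * ENNReal.ofReal (R ^ 2 * (R ^ n * ballVol n)) := by
        gcongr
        exact (lintegral_mono_set (Set.prod_mono subset_rfl (Set.subset_univ _))).trans
          (hdS.trans hI)
    _ = _ := by
        have e : 2 * ENNReal.ofReal ((2 * R) ^ n * ballVol n) +
            2 * ENNReal.ofReal (c / R) ^ 2 * ENNReal.ofReal (R ^ 2 * (R ^ n * ballVol n)) =
            ENNReal.ofReal (R ^ n * ballVol n) *
              ENNReal.ofReal √(2 * 2 ^ n + 2 * c ^ 2) ^ 2 := by
          have e2 : (2 : ℝ≥0∞) = ENNReal.ofReal 2 := by simp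
          rw [← ENNReal.ofReal_pow (by positivity), ← ENNReal.ofReal_pow (by positivity),
            Real.sq_sqrt hC.le, e2, ← ENNReal.ofReal_mul (by positivity),
            ← ENNReal.ofReal_mul (by positivity), ← ENNReal.ofReal_mul (by positivity),
            ← ENNReal.ofReal_mul (by positivity),
            ← ENNReal.ofReal_add (by positivity) (by positivity)]
          congr 1
          field_simp
          ring
        rw [hq, mul_pow _ A, mul_pow _ A, ← mul_assoc (ENNReal.ofReal (R ^ n * ballVol n)), ← e]
        ring

end FarField

/-- **Off-diagonal estimates for `M⁺` and `T^{∞,2}` boundedness:** if the family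
`((t-s)Δe^{(t-s)Δ})` satisfies `L²` off-diagonal estimates of order `M > n/4` with
homogeneity 2, then for `F` supported in `[0,R²] × (B(x₀,2^{j+1}R) \ B(x₀,2^jR))`, `j ≥ 1`,
`∫₀^{R²}∫_{B(x₀,R)} |M⁺F|² ≤ C 2^{-4Mj} ‖F‖²_{L²([0,R²]×ℝⁿ)}`;
consequently `M⁺` is bounded on `T^{∞,2}`. -/
theorem maxReg_offdiag_and_tent_bounded (n : ℕ) (hn : 1 ≤ n) (M C : ℝ)
    (hM : (n:ℝ)/4 < M) (hC : 0 < C)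
    (hOD : ∀ τ : ℝ, 0 < τ →
      ∀ (S1 S2 : Set (EuclideanSpace ℝ (Fin n))) (f : EuclideanSpace ℝ (Fin n) → ℂ),
        eLpNorm (S1.indicator fun x => (τ : ℂ) * lapHeatOp n τ (S2.indicator f) x) 2 volume
          ≤ ENNReal.ofReal (C * (1 + setDist S1 S2 ^ 2 / τ) ^ (-M)) *
              eLpNorm (S2.indicator f) 2 volume) :
    (∃ C' : ℝ, 0 < C' ∧
      ∀ (x₀ : EuclideanSpace ℝ (Fin n)) (R : ℝ) (j : ℕ)
        (F : ℝ × EuclideanSpace ℝ (Fin n) → ℂ),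
        0 < R → 1 ≤ j → Measurable F →
        (∀ z, z ∉ Set.Icc (0:ℝ) (R ^ 2) ×ˢ
            (ball x₀ (2 ^ (j+1) * R) \ ball x₀ (2 ^ j * R)) → F z = 0) →
        (∫⁻ z in Set.Icc (0:ℝ) (R ^ 2) ×ˢ ball x₀ R,
            ENNReal.ofReal (‖maxReg n F z‖ ^ 2))
          ≤ ENNReal.ofReal (C' * 2 ^ (-(4 * M * (j:ℝ)))) *
              ∫⁻ z in Set.Icc (0:ℝ) (R ^ 2) ×ˢ (Set.univ : Set (EuclideanSpace ℝ (Fin n))),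
                ENNReal.ofReal (‖F z‖ ^ 2)) ∧
    (∃ c : ℝ, 0 < c ∧
      ∀ F : ℝ × EuclideanSpace ℝ (Fin n) → ℂ, Measurable F →
        tentNorm2 n (maxReg n F) ≤ ENNReal.ofReal c * tentNorm2 n F) := by
  refine ⟨?_, tent_bounded n⟩
  obtain ⟨C', hC', h⟩ := offdiag n hM
  refine ⟨C', hC', fun x₀ R j F hR hj hF hsupp => ?_⟩
  simpa [ENNReal.ofReal_pow, annulus] using h x₀ R j F hR hj hF hsupp
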